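/- arXiv:0909.4732 — 2 statements merged into one kernel-verified Lean document; each statement's English description precedes it below -/
import Mathlib

section
/- Let S be a finite set of positive integers of cardinality n ≥ 1. Then the number of one-row descending plane partitions of order n with no special part equals the number of sequences listing each element of S exactly once that have exactly one ascent (i.e., exactly one index k with s_k < s_{k+1}). -/
/-- A one-row descending plane partition of order `n` with no special part:
a weakly decreasing list of integers in `{1,…,n}` whose first entry exceeds its length
and whose `k`-th entry (1-indexed) is at least `k`. -/
def OneRowDPP (n : ℕ) (a : List ℕ) : Prop :=
  a.Chain' (· ≥ ·) ∧ (∀ x ∈ a, 1 ≤ x ∧ x ≤ n) ∧ a.length < a.getD 0 0 ∧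
  ∀ p < a.length, p < a.getD p 0

/-- The number of ascents of a word `l`: positions `k` (0-indexed) with `l_k < l_{k+1}`. -/
def numAscents (l : List ℕ) : ℕ :=
  ((List.range (l.length - 1)).filter fun k => decide (l.getD k 0 < l.getD (k + 1) 0)).length

section Helpers
open Finset

lemma aux_numAscents_eq (l : List ℕ) : numAscents l =
    #{k ∈ Finset.range (l.length - 1) | l.getD k 0 < l.getD (k + 1) 0} := rfl

lemma aux_pairwise_iff (l : List ℕ) : l.Pairwise (· ≥ ·) ↔
    ∀ k, k + 1 < l.length → l.getD (k + 1) 0 ≤ l.getD k 0 := by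
  rw [← List.isChain_iff_pairwise, List.isChain_iff_getElem]
  constructor
  · intro h k hk
    have := h k hk
    rw [List.getD_eq_getElem _ _ hk, List.getD_eq_getElem _ _ (by omega)]
    exact this
  · intro h k hk
    have := h k hk
    rw [List.getD_eq_getElem _ _ hk, List.getD_eq_getElem _ _ (by omega)] at this
    exact this

/-- decreasing arrangement of `T` followed by that of `S \ T` -/
def auxWord (S T : Finset ℕ) : List ℕ := T.sort (· ≥ ·) ++ (S \ T).sort (· ≥ ·)

lemma auxWord_coe (S T : Finset ℕ) (h : T ⊆ S) : (auxWord S T : Multiset ℕ) = S.val := by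
  unfold auxWord
  rw [← Multiset.coe_add, Finset.sort_eq, Finset.sort_eq, add_comm]
  have := Finset.sdiff_val S T
  rw [this]
  exact Multiset.sub_add_cancel (Finset.val_le_iff.2 h)

lemma auxWord_length (S T : Finset ℕ) (h : T ⊆ S) : (auxWord S T).length = S.card := by
  have := congrArg Multiset.card (auxWord_coe S T h)
  simpa using this

lemma auxWord_step (S T : Finset ℕ) (k : ℕ) (hk : k + 1 < (auxWord S T).length)
    (hkT : k + 1 ≠ T.card) : (auxWord S T).getD (k + 1) 0 ≤ (auxWord S T).getD k 0 := by
  have h1 := (aux_pairwise_iff _).1 (Finset.pairwise_sort T (· ≥ ·))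
  have h2 := (aux_pairwise_iff _).1 (Finset.pairwise_sort (S \ T) (· ≥ ·))
  have e1 : (T.sort (· ≥ ·)).length = T.card := by simp
  unfold auxWord at hk ⊢
  rw [List.length_append] at hk
  rcases lt_or_gt_of_ne hkT with h | h
  · rw [List.getD_append _ _ _ _ (by omega), List.getD_append _ _ _ _ (by omega)]
    exact h1 k (by omega)
  · rw [List.getD_append_right _ _ _ _ (by omega), List.getD_append_right _ _ _ _ (by omega)]
    have := h2 (k - T.card) (by omega)
    rw [e1, show k + 1 - T.card = k - T.card + 1 by omega]
    exact this

lemma auxWord_numAscents (S T : Finset ℕ) :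
    numAscents (auxWord S T) = 1 ↔ ¬ (auxWord S T).Pairwise (· ≥ ·) := by
  rw [aux_pairwise_iff, aux_numAscents_eq]
  constructor
  · intro h h'
    obtain ⟨k, hk⟩ := Finset.card_eq_one.1 h
    have : k ∈ ({k} : Finset ℕ) := by simp
    rw [← hk] at this
    simp only [Finset.mem_filter, Finset.mem_range] at this
    have := h' k (by omega)
    omega
  · intro h
    push Not at h
    obtain ⟨k, hk, hlt⟩ := h
    rw [Finset.card_eq_one]
    refine ⟨k, ?_⟩
    have key : ∀ j, j + 1 < (auxWord S T).length →
        (auxWord S T).getD j 0 < (auxWord S T).getD (j + 1) 0 → j + 1 = T.card := by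
      intro j hj hj'
      by_contra hne
      have := auxWord_step S T j hj hne
      omega
    ext j
    simp only [Finset.mem_filter, Finset.mem_range, Finset.mem_singleton]
    constructor
    · rintro ⟨h1, h2⟩
      have := key j (by omega) h2
      have := key k hk hlt
      omega
    · rintro rfl
      exact ⟨by omega, hlt⟩

lemma auxWord_of_append (S : Finset ℕ) (A B : List ℕ) (h : ((A ++ B : List ℕ) : Multiset ℕ) = S.val)
    (hA : A.Pairwise (· ≥ ·)) (hB : B.Pairwise (· ≥ ·)) :
    A.toFinset ⊆ S ∧ auxWord S A.toFinset = A ++ B ∧ A.toFinset.card = A.length := by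
  have hnd : (A ++ B).Nodup := by
    rw [← Multiset.coe_nodup, h]; exact S.nodup
  have hS : ∀ x, x ∈ S ↔ x ∈ A ∨ x ∈ B := by
    intro x
    rw [← Finset.mem_val, ← h]; simp
  rw [List.nodup_append'] at hnd
  obtain ⟨nA, nB, dis⟩ := hnd
  refine ⟨?_, ?_, List.toFinset_card_of_nodup nA⟩
  · intro x hx
    rw [hS]; left; simpa using hx
  · have : S \ A.toFinset = B.toFinset := by
      ext x
      have := @dis x
      simp only [Finset.mem_sdiff, hS, List.mem_toFinset]
      tauto
    unfold auxWord
    rw [this, (List.toFinset_sort _ nA).2 hA, (List.toFinset_sort _ nB).2 hB]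

lemma auxWord_inj (S T U : Finset ℕ) (hle : T.card ≤ U.card)
    (hT' : ¬ (auxWord S T).Pairwise (· ≥ ·)) (h : auxWord S T = auxWord S U) : T = U := by
  rcases hle.lt_or_eq with hlt | heq
  · exfalso
    apply hT'
    rw [aux_pairwise_iff]
    intro k hk
    by_cases hkT : k + 1 = T.card
    · rw [h] at hk ⊢
      exact auxWord_step S U k hk (by omega)
    · exact auxWord_step S T k hk hkT
  · have := (List.append_inj h (by simpa using heq)).1
    have := congrArg List.toFinset this
    simpa using this

lemma aux_right (S : Finset ℕ) :
    {l : List ℕ | (l : Multiset ℕ) = S.val ∧ numAscents l = 1}.ncard + (S.card + 1)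
      = 2 ^ S.card := by
  classical
  have e : {l : List ℕ | (l : Multiset ℕ) = S.val ∧ numAscents l = 1} =
      ((S.powerset.filter (fun T => ¬ (auxWord S T).Pairwise (· ≥ ·))).image (auxWord S) :
        Finset (List ℕ)) := by
    ext l
    simp only [Set.mem_ofPred_eq, Finset.coe_image, Set.mem_image, Finset.mem_coe,
      Finset.mem_filter, Finset.mem_powerset]
    constructor
    · rintro ⟨h1, h2⟩
      have h2' := h2
      rw [aux_numAscents_eq] at h2
      obtain ⟨k, hk⟩ := Finset.card_eq_one.1 h2
      have hiff : ∀ j, (j < l.length - 1 ∧ l.getD j 0 < l.getD (j + 1) 0) ↔ j = k := by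
        intro j
        have := Finset.ext_iff.1 hk j
        simpa only [Finset.mem_filter, Finset.mem_range, Finset.mem_singleton] using this
      have hkl := ((hiff k).2 rfl).1
      have hA : (l.take (k + 1)).Pairwise (· ≥ ·) := by
        rw [aux_pairwise_iff]
        intro j hj
        rw [List.length_take] at hj
        rw [List.getD_eq_getElem _ _ (by simp; omega), List.getD_eq_getElem _ _ (by simp; omega),
          List.getElem_take, List.getElem_take]
        by_contra hc
        have := (hiff j).1 ⟨by omega, by
          rw [List.getD_eq_getElem _ _ (by omega), List.getD_eq_getElem _ _ (by omega)]; omega⟩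
        omega
      have hB : (l.drop (k + 1)).Pairwise (· ≥ ·) := by
        rw [aux_pairwise_iff]
        intro j hj
        rw [List.length_drop] at hj
        rw [List.getD_eq_getElem _ _ (by simp; omega), List.getD_eq_getElem _ _ (by simp; omega),
          List.getElem_drop, List.getElem_drop]
        by_contra hc
        have := (hiff (k + 1 + j)).1 ⟨by omega, by
          rw [List.getD_eq_getElem _ _ (by omega), List.getD_eq_getElem _ _ (by omega)]
          exact not_le.1 hc⟩
        omega
      obtain ⟨a, b, -⟩ := auxWord_of_append S _ _ (by rw [List.take_append_drop]; exact h1) hA hB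
      rw [List.take_append_drop] at b
      refine ⟨_, ⟨a, ?_⟩, b⟩
      rw [← auxWord_numAscents, b]
      exact h2'
    · rintro ⟨T, ⟨hT, hn⟩, rfl⟩
      exact ⟨auxWord_coe S T hT, (auxWord_numAscents S T).2 hn⟩
  have hbad : S.powerset.filter (fun T => (auxWord S T).Pairwise (· ≥ ·)) =
      (Finset.range (S.card + 1)).image (fun k => ((S.sort (· ≥ ·)).take k).toFinset) := by
    ext T
    simp only [Finset.mem_filter, Finset.mem_powerset, Finset.mem_image, Finset.mem_range]
    constructor
    · rintro ⟨hT, hp⟩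
      refine ⟨T.card, Nat.lt_succ_of_le (Finset.card_le_card hT), ?_⟩
      have hperm : (auxWord S T).Perm (S.sort (· ≥ ·)) := by
        rw [← Multiset.coe_eq_coe, auxWord_coe S T hT, Finset.sort_eq]
      have := hperm.eq_of_pairwise' hp (Finset.pairwise_sort S (· ≥ ·))
      rw [← this]
      unfold auxWord
      rw [List.take_left' (by simp)]
      simp
    · rintro ⟨k, hk, rfl⟩
      have hs := Finset.pairwise_sort S (· ≥ ·)
      obtain ⟨a, b, -⟩ := auxWord_of_append S ((S.sort (· ≥ ·)).take k) ((S.sort (· ≥ ·)).drop k)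
        (by rw [List.take_append_drop, Finset.sort_eq]) (hs.sublist (List.take_sublist _ _))
        (hs.sublist (List.drop_sublist _ _))
      rw [List.take_append_drop] at b
      refine ⟨a, ?_⟩
      rw [b]
      exact hs
  have hbadc : #(S.powerset.filter (fun T => (auxWord S T).Pairwise (· ≥ ·))) = S.card + 1 := by
    rw [hbad, Finset.card_image_of_injOn, Finset.card_range]
    have hc : ∀ k < S.card + 1, ((S.sort (· ≥ ·)).take k).toFinset.card = k := by
      intro k hk
      rw [List.toFinset_card_of_nodup ((Finset.sort_nodup S _).sublist (List.take_sublist _ _)),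
        List.length_take, Finset.length_sort]
      omega
    intro i hi j hj hij
    simp only [Finset.coe_range, Set.mem_Iio] at hi hj
    have := congrArg Finset.card hij
    simp only [hc i hi, hc j hj] at this
    exact this
  rw [e, Set.ncard_coe_finset, Finset.card_image_of_injOn, ← hbadc, add_comm,
    Finset.card_filter_add_card_filter_not, Finset.card_powerset]
  intro T hT U hU h
  simp only [Finset.coe_filter, Set.mem_ofPred_eq] at hT hU
  rcases le_total T.card U.card with hl | hl
  · exact auxWord_inj S T U hl hT.2 h
  · exact (auxWord_inj S U T hl hU.2 h.symm).symm

/-- sorted list of a multiset in `[m,n]` -/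
def auxList (n m : ℕ) (s : Sym (Finset.Icc m n) m) : List ℕ :=
  ((s : Multiset (Finset.Icc m n)).map Subtype.val).sort (· ≥ ·)

lemma auxList_inj (n m : ℕ) : Function.Injective (auxList n m) := by
  intro s t h
  have := congrArg (fun l : List ℕ => (l : Multiset ℕ)) h
  simp only [auxList, Multiset.sort_eq] at this
  exact Sym.coe_injective (Multiset.map_injective Subtype.val_injective this)

lemma mem_auxList (n m : ℕ) (a : List ℕ) : (∃ s, auxList n m s = a) ↔
    a.Pairwise (· ≥ ·) ∧ a.length = m ∧ ∀ x ∈ a, m ≤ x ∧ x ≤ n := by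
  constructor
  · rintro ⟨s, rfl⟩
    refine ⟨Multiset.pairwise_sort _ _, ?_, ?_⟩
    · simp [auxList]
    · intro x hx
      simp only [auxList, Multiset.mem_sort, Multiset.mem_map] at hx
      obtain ⟨y, -, rfl⟩ := hx
      exact Finset.mem_Icc.1 y.2
  · rintro ⟨h1, h2, h3⟩
    have h3' : ∀ x ∈ a, x ∈ Finset.Icc m n := fun x hx => Finset.mem_Icc.2 (h3 x hx)
    refine ⟨⟨((a.attach.map fun x => ⟨x.1, h3' x.1 x.2⟩ : List (Finset.Icc m n)) :
      Multiset (Finset.Icc m n)), by simpa using h2⟩, ?_⟩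
    have hm : (Multiset.map Subtype.val ((a.attach.map fun x => ⟨x.1, h3' x.1 x.2⟩ :
        List (Finset.Icc m n)) : Multiset (Finset.Icc m n))) = (a : Multiset ℕ) := by
      simp [Function.comp_def]
    refine List.Perm.eq_of_pairwise' (Multiset.pairwise_sort _ _) h1 ?_
    rw [← Multiset.coe_eq_coe]
    exact (Multiset.sort_eq _ _).trans hm

lemma aux_left (n : ℕ) : {a : List ℕ | OneRowDPP n a}.ncard + (n + 1) = 2 ^ n := by
  classical
  let F : ℕ → Finset (List ℕ) := fun m =>
    ((Finset.univ : Finset (Sym (Finset.Icc m n) m)).image (auxList n m)).erase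
      (List.replicate m m)
  have hF : ∀ m a, a ∈ F m ↔ a ≠ List.replicate m m ∧
      a.Pairwise (· ≥ ·) ∧ a.length = m ∧ ∀ x ∈ a, m ≤ x ∧ x ≤ n := by
    intro m a
    simp only [F, Finset.mem_erase, Finset.mem_image, Finset.mem_univ, true_and, mem_auxList]
  have hcard : ∀ m ∈ Finset.range (n + 1), #(F m) + 1 = n.choose m := by
    intro m hm
    have hm := Finset.mem_range.1 hm
    have : List.replicate m m ∈
        (Finset.univ : Finset (Sym (Finset.Icc m n) m)).image (auxList n m) := by
      simp only [Finset.mem_image, Finset.mem_univ, true_and, mem_auxList]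
      refine ⟨by simp [List.pairwise_replicate], by simp, ?_⟩
      intro x hx
      have := List.eq_of_mem_replicate hx
      omega
    simp only [F]
    rw [Finset.card_erase_add_one this, Finset.card_image_of_injective _ (auxList_inj n m),
      Finset.card_univ, Sym.card_sym_eq_multichoose, Nat.multichoose_eq, Fintype.card_coe,
      Nat.card_Icc]
    congr 1
    omega
  have e : {a : List ℕ | OneRowDPP n a} = ((Finset.range (n + 1)).biUnion F : Finset (List ℕ)) := by
    ext a
    simp only [Set.mem_ofPred_eq, Finset.coe_biUnion, Set.mem_iUnion, Finset.mem_coe, hF,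
      Finset.mem_range, exists_prop, OneRowDPP]
    constructor
    · rintro ⟨h1, h2, h3, h4⟩
      have h1' : a.Pairwise (· ≥ ·) := List.isChain_iff_pairwise.1 h1
      have hne : 0 < a.length := by
        rcases a with _ | ⟨x, a⟩
        · simp at h3
        · simp
      rw [List.getD_eq_getElem _ _ hne] at h3
      have hb := (h2 _ (List.getElem_mem hne)).2
      refine ⟨a.length, by omega, ?_, h1', rfl, ?_⟩
      · intro h
        have h0 : a[0] ∈ a := List.getElem_mem hne
        have := (List.eq_replicate_iff.1 h).2 _ h0
        omega
      · intro x hx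
        refine ⟨?_, (h2 x hx).2⟩
        obtain ⟨i, hi, rfl⟩ := List.getElem_of_mem hx
        have hl := h4 (a.length - 1) (by omega)
        rw [List.getD_eq_getElem _ _ (by omega)] at hl
        rcases (show i ≤ a.length - 1 by omega).lt_or_eq with h | h
        · have := List.pairwise_iff_getElem.1 h1' i (a.length - 1) hi (by omega) h
          omega
        · subst h; omega
    · rintro ⟨m, hm, h0, h1, h2, h3⟩
      have hne : 0 < a.length := by
        rcases a with _ | ⟨x, a⟩
        · simp at h2; subst h2; simp at h0
        · simp
      refine ⟨List.isChain_iff_pairwise.2 h1, fun x hx => ⟨?_, (h3 x hx).2⟩, ?_, ?_⟩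
      · have := (h3 x hx).1; omega
      · rw [List.getD_eq_getElem _ _ hne]
        by_contra hc
        apply h0
        rw [List.eq_replicate_iff]
        refine ⟨h2, fun x hx => ?_⟩
        have hx1 := (h3 x hx).1
        obtain ⟨i, hi, rfl⟩ := List.getElem_of_mem hx
        rcases Nat.eq_zero_or_pos i with h | h
        · subst h; omega
        · have := List.pairwise_iff_getElem.1 h1 0 i hne hi h
          omega
      · intro p hp
        rw [List.getD_eq_getElem _ _ hp]
        have := (h3 _ (List.getElem_mem hp)).1
        omega
  rw [e, Set.ncard_coe_finset, Finset.card_biUnion]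
  · have : ∑ m ∈ Finset.range (n + 1), (#(F m) + 1) = 2 ^ n := by
      rw [Finset.sum_congr rfl hcard, Nat.sum_range_choose]
    rw [Finset.sum_add_distrib] at this
    simpa using this
  · intro i _ j _ hij
    refine Finset.disjoint_left.2 ?_
    intro a ha hb
    rw [hF] at ha hb
    exact hij (ha.2.2.1.symm.trans hb.2.2.1)

end Helpers


/-- For a finite set `S` of positive integers of cardinality `n ≥ 1`, the number of one-row
descending plane partitions of order `n` with no special part equals the number of sequences
listing each element of `S` exactly once that have exactly one ascent. -/
theorem oneRowDPP_card_eq_seq_oneAscent_card (S : Finset ℕ) (hS : ∀ x ∈ S, 0 < x)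
    (n : ℕ) (hn : 1 ≤ n) (hcard : S.card = n) :
    {a : List ℕ | OneRowDPP n a}.ncard =
      {l : List ℕ | (l : Multiset ℕ) = S.val ∧ numAscents l = 1}.ncard := by
  have h1 := aux_left n
  have h2 := aux_right S
  rw [hcard] at h2
  omega
end

section
/- For every n ≥ 1, there exists a bijection Φ from the set of descending plane partitions of order n with no special part onto the set of permutations of {1,…,n} such that, for every such DPP a with k rows of lengths m_1,…,m_k, the permutation Φ(a) has exactly k ascents and its non-inversion number satisfies I(Φ(a)) = Σ_{i=1}^k Σ_{j=i}^{m_i+i−1} a_{i,j} − Σ_{i=1}^k m_i². -/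
/-- A descending plane partition, encoded as a list of rows (top row first).
Row `i` (0-indexed) occupies columns `i+1, …, μ_{i+1}` (1-indexed), so the entry at
position `p` (0-indexed) of row `i` is `a_{i+1, i+1+p}`, and `μ_{i+1} = rowlength + i`. -/
def IsDPP (a : List (List ℕ)) : Prop :=
  -- rows are nonempty arrays of positive integers
  (∀ row ∈ a, row ≠ []) ∧
  (∀ row ∈ a, ∀ x ∈ row, 0 < x) ∧
  -- (1) μ_1 ≥ μ_2 ≥ … ≥ μ_r (where μ_{i+1} = length of row i + i, 0-indexed rows)
  (∀ i, i + 1 < a.length →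
    (a.getD (i + 1) []).length + (i + 1) ≤ (a.getD i []).length + i) ∧
  -- (2) rows weakly decreasing
  (∀ row ∈ a, row.Chain' (· ≥ ·)) ∧
  -- (2') columns strictly decreasing (whenever both entries are defined)
  (∀ i p, i + 1 < a.length → p < (a.getD (i + 1) []).length →
    (a.getD (i + 1) []).getD p 0 < (a.getD i []).getD (p + 1) 0) ∧
  -- (3) each diagonal entry exceeds the number of entries in its row
  (∀ row ∈ a, row.length < row.getD 0 0) ∧
  -- (4) each diagonal entry is at most the number of entries in the row above
  (∀ i, i + 1 < a.length → (a.getD (i + 1) []).getD 0 0 ≤ (a.getD i []).length)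

/-- A DPP has order `n` when all its entries are at most `n`. -/
def DPPOrder (a : List (List ℕ)) (n : ℕ) : Prop := ∀ row ∈ a, ∀ x ∈ row, x ≤ n

/-- No entry `a_{i,j}` is special, i.e. `a_{i,j} > j - i` throughout: the entry at
(0-indexed) position `p` of any row exceeds `p`. -/
def NoSpecialPart (a : List (List ℕ)) : Prop :=
  ∀ row ∈ a, ∀ p < row.length, p < row.getD p 0

/-- The non-inversion number of a word `l`: the number of pairs `i < j` with `l_i < l_j`. -/
def noninv (l : List ℕ) : ℕ :=
  ((Finset.range l.length ×ˢ Finset.range l.length).filter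
    fun p => p.1 < p.2 ∧ l.getD p.1 0 < l.getD p.2 0).card


namespace DPPaux

/-- multiplicity of `n` in the first row -/
def cnt (n : ℕ) : List (List ℕ) → ℕ
  | [] => 0
  | r :: _ => r.count n

/-- recursive description of descending plane partitions of order `n` without special parts -/
def Good : ℕ → List (List ℕ) → Prop
  | _, [] => True
  | n, r :: rs => r.Pairwise (· ≥ ·) ∧ (∀ y ∈ r, r.length ≤ y ∧ y ≤ n) ∧
      cnt r.length rs < r.countP (fun y => decide (r.length < y)) ∧ Good r.length rs

/-- increase the order by one, using a code letter `x` -/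
def U (n x : ℕ) (a : List (List ℕ)) : List (List ℕ) :=
  if cnt n a < x then (List.replicate x (n + 1) ++ List.replicate (n - x) n) :: a
  else match a with
    | [] => []
    | r :: rs => (List.replicate x (n + 1) ++ r.drop x) :: rs

/-- decrease the order by one -/
def D (n : ℕ) : List (List ℕ) → List (List ℕ)
  | [] => []
  | r :: rs => if r.length = n then rs else r.map (min n) :: rs

/-- Lehmer-type code of a word -/
def code : List ℕ → List ℕ
  | [] => []
  | x :: w => w.countP (fun y => decide (x < y)) :: code w

/-- array from a code -/
def G : List ℕ → List (List ℕ)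
  | [] => []
  | x :: w => U w.length x (G w)

def IsCode : List ℕ → Prop
  | [] => True
  | x :: w => x ≤ w.length ∧ IsCode w

theorem split_top (N : ℕ) : ∀ (r : List ℕ) (x : ℕ), r.Pairwise (· ≥ ·) → (∀ y ∈ r, y ≤ N) →
    x ≤ r.count N → ∃ s, r = List.replicate x N ++ s
  | [], x, _, _, hx => by
    simp at hx; subst hx; exact ⟨[], by simp⟩
  | a :: r, 0, _, _, _ => ⟨a :: r, by simp⟩
  | a :: r, x + 1, hp, hN, hx => by
    have hp' := List.pairwise_cons.1 hp
    have haN : a = N := by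
      by_contra h
      have h1 : a ≤ N := hN a (by simp)
      have : (a :: r).count N = 0 := by
        rw [List.count_eq_zero]
        intro hm
        rcases List.mem_cons.1 hm with h2 | h2
        · exact h h2.symm
        · have := hp'.1 N h2
          omega
      omega
    subst haN
    obtain ⟨s, hs⟩ := split_top a r x hp'.2 (fun y hy => hN y (by simp [hy])) (by simpa using hx)
    exact ⟨s, by rw [List.replicate_succ, List.cons_append, ← hs]⟩

theorem pairwise_rep {N x : ℕ} {s : List ℕ} (hs : s.Pairwise (· ≥ ·)) (h : ∀ y ∈ s, y ≤ N) :
    (List.replicate x N ++ s).Pairwise (· ≥ ·) := by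
  rw [List.pairwise_append]
  refine ⟨?_, hs, ?_⟩
  · rw [List.pairwise_replicate]; simp
  · intro a ha b hb
    rw [List.eq_of_mem_replicate ha]; exact h b hb

theorem Good.len_lt {n : ℕ} {r : List ℕ} {rs : List (List ℕ)} (h : Good n (r :: rs)) :
    r.length < n := by
  obtain ⟨_, h2, h3, _⟩ := h
  have : 0 < r.countP (fun y => decide (r.length < y)) := by omega
  rw [List.countP_pos_iff] at this
  obtain ⟨a, ha, hb⟩ := this
  have := (h2 a ha).2
  simp at hb
  omega

theorem cnt_le {n : ℕ} {a : List (List ℕ)} (h : Good n a) : cnt n a ≤ n := by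
  cases a with
  | nil => simp [cnt]
  | cons r rs =>
    have := h.len_lt
    have h2 : r.count n ≤ r.length := List.count_le_length
    simp only [cnt]; omega

/-- normal form of a good array with respect to an allowed letter -/
theorem good_split {n x : ℕ} {r : List ℕ} {rs : List (List ℕ)} (h : Good n (r :: rs))
    (hx : x ≤ r.count n) : ∃ s, r = List.replicate x n ++ s ∧ s.Pairwise (· ≥ ·) ∧ ∀ y ∈ s, y ≤ n := by
  obtain ⟨s, hs⟩ := split_top n r x h.1 (fun y hy => (h.2.1 y hy).2) hx
  refine ⟨s, hs, ?_, fun y hy => (h.2.1 y (by rw [hs]; simp [hy])).2⟩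
  have := h.1
  rw [hs, List.pairwise_append] at this
  exact this.2.1

theorem good_U {n x : ℕ} {a : List (List ℕ)} (h : Good n a) (hx : x ≤ n) :
    Good (n + 1) (U n x a) := by
  unfold U
  split_ifs with hc
  · have hl : (List.replicate x (n + 1) ++ List.replicate (n - x) n).length = n := by
      simp; omega
    simp only [Good, hl]
    refine ⟨?_, ?_, ?_, h⟩
    · apply pairwise_rep
      · rw [List.pairwise_replicate]; simp
      · intro y hy; rw [List.eq_of_mem_replicate hy]; omega
    · intro y hy
      rcases List.mem_append.1 hy with hy | hy <;> rw [List.eq_of_mem_replicate hy] <;> omega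
    · simpa [List.countP_append, List.countP_replicate] using hc
  · cases a with
    | nil => simp [Good]
    | cons r rs =>
      simp only [cnt, not_lt] at hc
      have hlt := h.len_lt
      obtain ⟨s, hs, hp, hle⟩ := good_split h hc
      obtain ⟨h1, h2, h3, h4⟩ := h
      have hd : r.drop x = s := by rw [hs]; simp
      have hl : (List.replicate x (n + 1) ++ s).length = r.length := by rw [hs]; simp
      simp only [hd, Good, hl]
      refine ⟨?_, ?_, ?_, h4⟩
      · exact pairwise_rep hp (fun y hy => by have := hle y hy; omega)
      · intro y hy
        rcases List.mem_append.1 hy with hy | hy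
        · rw [List.eq_of_mem_replicate hy]; omega
        · have := h2 y (by rw [hs]; simp [hy])
          omega
      · refine lt_of_lt_of_eq h3 ?_
        generalize r.length = m at *
        subst hs
        have : m < n + 1 := by omega
        simp [List.countP_append, List.countP_replicate, hlt, this]

theorem count_top {n : ℕ} {s : List ℕ} (h : ∀ y ∈ s, y ≤ n) : s.count (n + 1) = 0 := by
  rw [List.count_eq_zero]
  intro hm
  have := h _ hm
  omega

theorem map_min {n : ℕ} {s : List ℕ} (h : ∀ y ∈ s, y ≤ n) : s.map (min n) = s := by
  conv_rhs => rw [← List.map_id s]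
  apply List.map_congr_left
  intro a ha
  simpa using h a ha

theorem cnt_U {n x : ℕ} {a : List (List ℕ)} (h : Good n a) :
    cnt (n + 1) (U n x a) = x := by
  unfold U
  split_ifs with hc
  · simp [cnt, List.count_replicate]
  · cases a with
    | nil => simp [cnt] at hc ⊢; omega
    | cons r rs =>
      simp only [cnt, not_lt] at hc
      obtain ⟨s, hs, hp, hle⟩ := good_split h hc
      have hd : r.drop x = s := by rw [hs]; simp
      simp [cnt, hd, count_top hle]

theorem D_U {n x : ℕ} {a : List (List ℕ)} (h : Good n a) (hx : x ≤ n) :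
    D n (U n x a) = a := by
  unfold U
  split_ifs with hc
  · have : x + (n - x) = n := by omega
    simp [D, this]
  · cases a with
    | nil => simp [D]
    | cons r rs =>
      simp only [cnt, not_lt] at hc
      have hlt := h.len_lt
      obtain ⟨s, hs, hp, hle⟩ := good_split h hc
      have hd : r.drop x = s := by rw [hs]; simp
      have hl : (List.replicate x (n + 1) ++ s).length = r.length := by rw [hs]; simp
      simp only [D, hd, hl, hlt.ne, if_false]
      rw [List.map_append, map_min hle, List.map_replicate, hs]
      simp

theorem surj_U {n : ℕ} {a : List (List ℕ)} (h : Good (n + 1) a) :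
    ∃ x a', x ≤ n ∧ Good n a' ∧ U n x a' = a := by
  cases a with
  | nil => exact ⟨0, [], by omega, trivial, by simp [U, cnt]⟩
  | cons r rs =>
    have hlt := h.len_lt
    obtain ⟨s, hs, hp, hle⟩ := good_split h le_rfl
    obtain ⟨h1, h2, h3, h4⟩ := h
    have hcl : r.count (n + 1) ≤ r.length := List.count_le_length
    generalize hx : r.count (n + 1) = x at hs hcl
    have hle' : ∀ y ∈ s, y ≤ n := by
      intro y hy
      have h0 : s.count (n + 1) = 0 := by
        have := hx
        rw [hs, List.count_append, List.count_replicate_self] at this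
        omega
      rw [List.count_eq_zero] at h0
      have := hle y hy
      have : y ≠ n + 1 := fun e => h0 (e ▸ hy)
      omega
    have hlen : r.length = x + s.length := by rw [hs]; simp
    by_cases hn : r.length = n
    · have hs' : s = List.replicate (n - x) n := by
        rw [List.eq_replicate_iff]
        refine ⟨by omega, fun y hy => ?_⟩
        have := (h2 y (by rw [hs]; simp [hy])).1
        have := hle' y hy
        omega
      rw [hn] at h3 h4
      refine ⟨x, rs, by omega, h4, ?_⟩
      have : r.countP (fun y => decide (n < y)) = x := by
        rw [hs, hs']; simp [List.countP_append, List.countP_replicate]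
      rw [this] at h3
      simp only [U, h3, if_true]
      rw [hs, hs']
    · have hl : (List.replicate x n ++ s).length = r.length := by rw [hs]; simp
      refine ⟨x, (List.replicate x n ++ s) :: rs, by omega, ?_, ?_⟩
      · simp only [Good, hl]
        refine ⟨pairwise_rep hp hle', ?_, ?_, h4⟩
        · intro y hy
          rcases List.mem_append.1 hy with hy | hy
          · rw [List.eq_of_mem_replicate hy]; omega
          · exact ⟨(h2 y (by rw [hs]; simp [hy])).1, hle' y hy⟩
        · refine lt_of_lt_of_eq h3 ?_
          have e1 : r.length < n := by omega
          clear hx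
          generalize r.length = m at *
          subst hs
          simp [List.countP_append, List.countP_replicate, hlt, e1]
      · have : ¬ (cnt n ((List.replicate x n ++ s) :: rs) < x) := by
          simp [cnt, List.count_append]
        simp only [U, this, if_false]
        rw [hs]; simp

theorem good_G : ∀ c : List ℕ, IsCode c → Good c.length (G c)
  | [], _ => trivial
  | _ :: w, h => good_U (good_G w h.2) h.1

theorem G_inj : ∀ c d : List ℕ, c.length = d.length → IsCode c → IsCode d → G c = G d → c = d
  | [], [], _, _, _, _ => rfl
  | [], _ :: _, h, _, _, _ => by simp at h
  | _ :: _, [], h, _, _, _ => by simp at h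
  | x :: c, y :: d, h, hc, hd, e => by
    have hl : c.length = d.length := by simpa using h
    have gc := good_G c hc.2
    have gd := good_G d hd.2
    simp only [G] at e
    have e1 := cnt_U (x := x) gc
    have e2 := cnt_U (x := y) gd
    have e3 := D_U gc hc.1
    have e4 := D_U gd hd.1
    rw [e, hl] at e1 e3
    rw [← e1, e2, G_inj c d hl hc.2 hd.2 (by rw [← e3, e4])]

theorem G_surj : ∀ (n : ℕ) (a : List (List ℕ)), Good n a →
    ∃ c, c.length = n ∧ IsCode c ∧ G c = a
  | 0, [], _ => ⟨[], rfl, trivial, rfl⟩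
  | 0, r :: rs, h => absurd h.len_lt (by omega)
  | n + 1, a, h => by
    obtain ⟨x, a', hx, ha', e⟩ := surj_U h
    obtain ⟨c, hc, hc', e'⟩ := G_surj n a' ha'
    refine ⟨x :: c, by simp [hc], ⟨by omega, hc'⟩, ?_⟩
    simp only [G, e', hc, e]

/-! statistics -/

theorem U_sum {n x : ℕ} {a : List (List ℕ)} (h : Good n a) (hx : x ≤ n) :
    ((U n x a).map List.sum).sum + (a.map fun row => row.length ^ 2).sum =
      x + (a.map List.sum).sum + ((U n x a).map fun row => row.length ^ 2).sum := by
  unfold U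
  split_ifs with hc
  · obtain ⟨k, rfl⟩ := Nat.exists_eq_add_of_le hx
    simp
    ring
  · cases a with
    | nil => simp [cnt] at hc ⊢; omega
    | cons r rs =>
      simp only [cnt, not_lt] at hc
      obtain ⟨s, hs, hp, hle⟩ := good_split h hc
      have hd : r.drop x = s := by rw [hs]; simp
      have hl : (List.replicate x (n + 1) ++ s).length = r.length := by rw [hs]; simp
      simp only [hd, List.map_cons, List.sum_cons, hl]
      have : (List.replicate x (n + 1) ++ s).sum = x + r.sum := by
        rw [hs]; simp; ring
      omega

theorem U_len {n x : ℕ} {a : List (List ℕ)} :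
    (U n x a).length = (if cnt n a < x then 1 else 0) + a.length := by
  unfold U
  split_ifs with hc
  · simp; omega
  · cases a <;> simp

theorem G_sum : ∀ c : List ℕ, IsCode c →
    c.sum + ((G c).map fun row => row.length ^ 2).sum = ((G c).map List.sum).sum
  | [], _ => by simp [G]
  | x :: w, h => by
    have h1 := U_sum (good_G w h.2) h.1
    have h2 := G_sum w h.2
    simp only [G, List.sum_cons]
    omega

theorem code_length : ∀ l : List ℕ, (code l).length = l.length
  | [] => rfl
  | _ :: w => by simp [code, code_length w]

theorem code_isCode : ∀ l : List ℕ, IsCode (code l)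
  | [] => trivial
  | _ :: w => ⟨by rw [code_length]; exact List.countP_le_length, code_isCode w⟩

theorem noninv_cons (x : ℕ) (w : List ℕ) :
    noninv (x :: w) = w.countP (fun y => decide (x < y)) + noninv w := by
  have hc : ∀ w : List ℕ, w.countP (fun y => decide (x < y)) =
      ∑ j ∈ Finset.range w.length, if x < w.getD j 0 then 1 else 0 := by
    intro w
    induction w with
    | nil => simp
    | cons a w ih =>
      rw [List.countP_cons, List.length_cons, Finset.sum_range_succ', ih]
      simp
  unfold noninv
  rw [Finset.card_filter, Finset.card_filter, Finset.sum_product, Finset.sum_product,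
    List.length_cons, Finset.sum_range_succ', add_comm, hc]
  congr 1
  · rw [Finset.sum_range_succ']
    simp
  · apply Finset.sum_congr rfl
    intro i _
    rw [Finset.sum_range_succ']
    simp

theorem noninv_code : ∀ l : List ℕ, noninv l = (code l).sum
  | [] => by simp [noninv, code]
  | x :: w => by rw [noninv_cons, noninv_code w]; simp [code]

theorem numAscents_cons (x y : ℕ) (w : List ℕ) :
    numAscents (x :: y :: w) = (if x < y then 1 else 0) + numAscents (y :: w) := by
  unfold numAscents
  simp only [List.length_cons, Nat.add_sub_cancel]
  rw [List.range_succ_eq_map, List.filter_cons]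
  rw [List.filter_map, apply_ite List.length]
  simp only [List.length_cons, List.length_map]
  have : ((fun k => decide ((x :: y :: w).getD k 0 < (x :: y :: w).getD (k + 1) 0)) ∘ Nat.succ) =
    (fun k => decide ((y :: w).getD k 0 < (y :: w).getD (k + 1) 0)) := by
    funext k; simp
  rw [this]
  simp
  split_ifs <;> omega

theorem asc_iff {x y : ℕ} {w : List ℕ} :
    w.countP (fun z => decide (y < z)) < (y :: w).countP (fun z => decide (x < z)) ↔ x < y := by
  rw [List.countP_cons]
  constructor
  · intro h
    by_contra hxy
    have : w.countP (fun z => decide (x < z)) ≤ w.countP (fun z => decide (y < z)) := by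
      apply List.countP_mono_left
      intro z _ hz
      simp at hz ⊢; omega
    simp [hxy] at h
    omega
  · intro h
    have : w.countP (fun z => decide (y < z)) ≤ w.countP (fun z => decide (x < z)) := by
      apply List.countP_mono_left
      intro z _ hz
      simp at hz ⊢; omega
    simp [h]
    omega


theorem numAscents_G : ∀ l : List ℕ, numAscents l = (G (code l)).length
  | [] => by simp [numAscents, code, G]
  | [x] => by simp [numAscents, code, G, U, cnt]
  | x :: y :: w => by
    rw [numAscents_cons, numAscents_G (y :: w)]
    rw [show G (code (x :: y :: w)) = U (code (y :: w)).length
      ((y :: w).countP (fun z => decide (x < z))) (G (code (y :: w))) from rfl, U_len]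
    congr 1
    have h : cnt (code (y :: w)).length (G (code (y :: w))) =
        w.countP (fun z => decide (y < z)) := cnt_U (good_G _ (code_isCode w))
    rw [h]
    simp only [asc_iff]

theorem code_head_le {x x' : ℕ} {w w' : List ℕ} (hp : (x :: w).Perm (x' :: w'))
    (h : w.countP (fun z => decide (x < z)) = w'.countP (fun z => decide (x' < z))) :
    ¬ x < x' := by
  intro hlt
  have hm : x' ∈ w := by
    have : x' ∈ x :: w := hp.mem_iff.2 (by simp)
    rcases List.mem_cons.1 this with e | e
    · omega
    · exact e
  have h1 := hp.countP_eq (fun z => decide (x' < z))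
  have h3 := List.perm_cons_erase hm
  have h4 := h3.countP_eq (fun z => decide (x < z))
  have h5 := h3.countP_eq (fun z => decide (x' < z))
  have h6 := (asc_iff (w := w.erase x')).2 hlt
  have h7 : ¬ (x' < x) := by omega
  simp only [List.countP_cons, lt_irrefl, h7, decide_false, Bool.false_eq_true, if_false] at h1 h5
  omega

theorem code_inj : ∀ l l' : List ℕ, l.Perm l' → code l = code l' → l = l'
  | [], [], _, _ => rfl
  | [], _ :: _, _, h => by simp [code] at h
  | _ :: _, [], _, h => by simp [code] at h
  | x :: w, x' :: w', hp, h => by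
    simp only [code, List.cons.injEq] at h
    have h1 := code_head_le hp h.1
    have h2 := code_head_le hp.symm h.1.symm
    have : x = x' := by omega
    subst this
    rw [code_inj w w' (List.perm_cons x |>.1 hp) h.2]

theorem code_surj : ∀ (c : List ℕ) (M : Finset ℕ), IsCode c → M.card = c.length →
    ∃ l : List ℕ, l.Nodup ∧ l.toFinset = M ∧ code l = c
  | [], M, _, h => ⟨[], by simp, by simpa using (Finset.card_eq_zero.1 h).symm, rfl⟩
  | c :: cs, M, hc, h => by
    have hs : Set.SurjOn (fun x => (M.filter (fun y => x < y)).card) M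
        (Finset.range M.card : Finset ℕ) := by
      apply Finset.surjOn_of_injOn_of_card_le
      · intro x hx
        simp only [Finset.coe_range, Set.mem_Iio]
        apply Finset.card_lt_card
        rw [Finset.filter_ssubset]
        exact ⟨x, hx, by simp⟩
      · have key : ∀ x ∈ M, ∀ y ∈ M, x < y →
            (M.filter (fun z => y < z)).card < (M.filter (fun z => x < z)).card := by
          intro x _ y hy hxy
          apply Finset.card_lt_card
          rw [Finset.ssubset_iff_of_subset]
          · exact ⟨y, by simp [hy, hxy], by simp⟩
          · intro z hz
            simp at hz ⊢
            exact ⟨hz.1, by omega⟩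
        intro x hx y hy e
        simp only at e
        by_contra hne
        rcases lt_or_gt_of_ne hne with g | g
        · have := key x hx y hy g; omega
        · have := key y hy x hx g; omega
      · simp
    have hcM : c ∈ ((Finset.range M.card : Finset ℕ) : Set ℕ) := by
      have := hc.1
      simp [h]; omega
    obtain ⟨x, hx, hxc⟩ := hs hcM
    have hx : x ∈ M := hx
    simp only at hxc
    obtain ⟨l, h1, h2, h3⟩ := code_surj cs (M.erase x) hc.2 (by
      rw [Finset.card_erase_of_mem hx, h]; simp)
    refine ⟨x :: l, ?_, ?_, ?_⟩
    · rw [List.nodup_cons]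
      refine ⟨?_, h1⟩
      rw [← List.mem_toFinset, h2]; simp
    · rw [List.toFinset_cons, h2, Finset.insert_erase hx]
    · simp only [code, h3, List.cons.injEq, and_true]
      rw [← hxc, List.countP_eq_length_filter, ← List.toFinset_card_of_nodup (h1.filter _),
        List.toFinset_filter, h2]
      congr 1
      ext y
      simp
      intro hy _ e
      omega

/-! equivalence of the recursive description with the definition -/

theorem lt_countP_iff (m : ℕ) : ∀ (r : List ℕ) (t : ℕ), r.Pairwise (· ≥ ·) →
    (t < r.countP (fun y => decide (m < y)) ↔ m < r.getD t 0)
  | [], t, _ => by simp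
  | a :: r, t, h => by
    have h' := List.pairwise_cons.1 h
    by_cases ha : m < a
    · cases t with
      | zero => simp [ha]
      | succ t =>
        have := lt_countP_iff m r t h'.2
        simp only [List.countP_cons, ha, decide_true, if_true, List.getD_cons_succ, ← this]
        omega
    · have h0 : (a :: r).countP (fun y => decide (m < y)) = 0 := by
        rw [List.countP_eq_zero]
        intro y hy
        rcases List.mem_cons.1 hy with e | e
        · simp; omega
        · have := h'.1 y e
          simp; omega
      rw [h0]
      simp only [Nat.not_lt_zero, false_iff, not_lt]
      by_cases ht : t < (a :: r).length
      · rw [List.getD_eq_getElem _ _ ht]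
        rcases List.mem_cons.1 (List.getElem_mem ht) with e | e
        · omega
        · have := h'.1 _ e
          omega
      · rw [List.getD_eq_default _ _ (by omega)]; omega

theorem le_head {r : List ℕ} (h : r.Pairwise (· ≥ ·)) : ∀ y ∈ r, y ≤ r.getD 0 0 := by
  cases r with
  | nil => simp
  | cons a r =>
    intro y hy
    rcases List.mem_cons.1 hy with e | e
    · simp [e]
    · simpa using (List.pairwise_cons.1 h).1 y e

/-- conditions on a single row -/
def RowOK (r : List ℕ) : Prop :=
  r ≠ [] ∧ (∀ x ∈ r, 0 < x) ∧ r.Pairwise (· ≥ ·) ∧ r.length < r.getD 0 0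

/-- conditions on two consecutive rows -/
def RowsOK (r s : List ℕ) : Prop :=
  s.length + 1 ≤ r.length ∧ (∀ p, p < s.length → s.getD p 0 < r.getD (p + 1) 0) ∧
    s.getD 0 0 ≤ r.length

theorem isDPP_iff (a : List (List ℕ)) : IsDPP a ↔
    (∀ r ∈ a, RowOK r) ∧ ∀ i, i + 1 < a.length → RowsOK (a.getD i []) (a.getD (i + 1) []) := by
  unfold IsDPP RowOK RowsOK
  simp only [List.Chain', List.isChain_iff_pairwise]
  constructor
  · rintro ⟨h1, h2, h3, h4, h5, h6, h7⟩
    refine ⟨fun r hr => ⟨h1 r hr, h2 r hr, h4 r hr, h6 r hr⟩, fun i hi => ⟨?_, fun p => h5 i p hi, h7 i hi⟩⟩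
    have := h3 i hi
    omega
  · rintro ⟨h1, h2⟩
    refine ⟨fun r hr => (h1 r hr).1, fun r hr => (h1 r hr).2.1, fun i hi => ?_,
      fun r hr => (h1 r hr).2.2.1, fun i p hi => (h2 i hi).2.1 p, fun r hr => (h1 r hr).2.2.2,
      fun i hi => (h2 i hi).2.2⟩
    have := (h2 i hi).1
    omega

theorem isDPP_nil : IsDPP [] := by
  rw [isDPP_iff]; simp

theorem isDPP_cons (r : List ℕ) (rs : List (List ℕ)) : IsDPP (r :: rs) ↔
    RowOK r ∧ (∀ s ∈ rs.head?, RowsOK r s) ∧ IsDPP rs := by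
  simp only [isDPP_iff]
  constructor
  · rintro ⟨h1, h2⟩
    refine ⟨h1 r (by simp), ?_, fun s hs => h1 s (by simp [hs]), fun i hi => ?_⟩
    · intro s hs
      cases rs with
      | nil => simp at hs
      | cons s' ss =>
        simp at hs; subst hs
        simpa using h2 0 (by simp)
    · simpa using h2 (i + 1) (by simpa using hi)
  · rintro ⟨h1, h2, h3, h4⟩
    refine ⟨?_, fun i hi => ?_⟩
    · intro s hs
      rcases List.mem_cons.1 hs with e | e
      · exact e ▸ h1
      · exact h3 s e
    · cases i with
      | zero =>
        cases rs with
        | nil => simp at hi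
        | cons s ss => simpa using h2 s (by simp)
      | succ i => simpa using h4 i (by simpa using hi)

theorem order_of_first : ∀ (a : List (List ℕ)) (n : ℕ), IsDPP a →
    (∀ s ∈ a.head?, s.getD 0 0 ≤ n) → DPPOrder a n
  | [], _, _, _ => by simp [DPPOrder]
  | r :: rs, n, h, hn => by
    rw [isDPP_cons] at h
    have hr := hn r (by simp)
    obtain ⟨⟨_, _, hp, hl⟩, h2, h3⟩ := h
    have ih := order_of_first rs n h3 (fun s hs => by
      have := (h2 s hs).2.2
      omega)
    intro s hs
    rcases List.mem_cons.1 hs with e | e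
    · subst e
      intro y hy
      exact (le_head hp y hy).trans hr
    · exact ih s e

theorem good_iff : ∀ (a : List (List ℕ)) (n : ℕ),
    Good n a ↔ IsDPP a ∧ DPPOrder a n ∧ NoSpecialPart a
  | [], n => by simp [Good, isDPP_nil, DPPOrder, NoSpecialPart]
  | r :: rs, n => by
    constructor
    · intro h
      have hlt := h.len_lt
      obtain ⟨h1, h2, h3, h4⟩ := h
      obtain ⟨d1, d2, d3⟩ := (good_iff rs r.length).1 h4
      rw [lt_countP_iff _ _ _ h1] at h3
      have hhead : r.length < r.getD 0 0 := by
        rw [← lt_countP_iff _ _ _ h1] at h3 ⊢; omega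
      have hne : r ≠ [] := by rintro rfl; simp at hhead
      have hpos := List.length_pos_iff.2 hne
      have hget : ∀ p < r.length, r.length ≤ r.getD p 0 := by
        intro p hp
        rw [List.getD_eq_getElem _ _ hp]
        exact (h2 _ (List.getElem_mem hp)).1
      have hD : IsDPP (r :: rs) := by
        rw [isDPP_cons]
        refine ⟨⟨hne, fun x hx => ?_, h1, hhead⟩, ?_, d1⟩
        · have := (h2 x hx).1; omega
        · intro s hs
          cases rs with
          | nil => simp at hs
          | cons s' ss =>
            simp only [List.head?_cons, Option.mem_def, Option.some.injEq] at hs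
            subst hs
            obtain ⟨⟨e1, e2, e3, e4⟩, _, _⟩ := (isDPP_cons _ _).1 d1
            have hsm : ∀ y ∈ s', y ≤ r.length := d2 s' (by simp)
            have hs0 : ∀ p, s'.getD p 0 ≤ r.length := by
              intro p
              by_cases hp : p < s'.length
              · rw [List.getD_eq_getElem _ _ hp]; exact hsm _ (List.getElem_mem hp)
              · rw [List.getD_eq_default _ _ (by omega)]; omega
            have := hs0 0
            refine ⟨by omega, fun p hp => ?_, hs0 0⟩
            rcases (hs0 p).lt_or_eq with g | g
            · exact lt_of_lt_of_le g (hget _ (by omega))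
            · rw [g, ← lt_countP_iff _ _ _ h1]
              rw [← lt_countP_iff _ _ _ h1] at h3
              have k1 : p < s'.countP (fun y => decide (r.length - 1 < y)) := by
                rw [lt_countP_iff _ _ _ e3]; omega
              have k2 : s'.countP (fun y => decide (r.length - 1 < y)) = s'.count r.length := by
                rw [List.count]
                apply List.countP_congr
                intro y hy
                have := hsm y hy
                simp; omega
              simp only [cnt] at h3
              omega
      refine ⟨hD, ?_, ?_⟩
      · intro s hs
        rcases List.mem_cons.1 hs with e | e
        · subst e; exact fun y hy => (h2 y hy).2
        · intro y hy
          have := d2 s e y hy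
          omega
      · intro s hs
        rcases List.mem_cons.1 hs with e | e
        · subst e
          intro p hp
          have := hget p hp
          omega
        · exact d3 s e
    · rintro ⟨h1, h2, h3⟩
      have ho := h1
      rw [isDPP_cons] at h1
      obtain ⟨⟨e1, e2, e3, e4⟩, f, h1'⟩ := h1
      have d2 : DPPOrder rs r.length := order_of_first rs _ h1' (fun s hs => (f s hs).2.2)
      have d3 : NoSpecialPart rs := fun s hs => h3 s (by simp [hs])
      refine ⟨e3, ?_, ?_, (good_iff rs r.length).2 ⟨h1', d2, d3⟩⟩
      · intro y hy
        refine ⟨?_, h2 r (by simp) y hy⟩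
        have hpos := List.length_pos_iff.2 e1
        have hl := h3 r (by simp) (r.length - 1) (by omega)
        rw [List.getD_eq_getElem _ _ (by omega)] at hl
        obtain ⟨i, hi, rfl⟩ := List.getElem_of_mem hy
        rcases (show i ≤ r.length - 1 by omega).lt_or_eq with g | g
        · have := List.pairwise_iff_getElem.1 e3 i (r.length - 1) hi (by omega) g
          omega
        · subst g; omega
      · rw [lt_countP_iff _ _ _ e3]
        cases rs with
        | nil => simpa [cnt] using e4
        | cons s ss =>
          simp only [cnt]
          have hs := f s (by simp)
          obtain ⟨⟨_, _, g3, _⟩, _⟩ := (isDPP_cons _ _).1 h1'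
          obtain ⟨u, hu⟩ := split_top r.length s _ g3 (d2 s (by simp)) le_rfl
          generalize s.count r.length = t at hu
          cases t with
          | zero => exact e4
          | succ t =>
            have k := hs.2.1 t (by rw [hu]; simp; omega)
            have : s.getD t 0 = r.length := by
              rw [hu, List.getD_append _ _ _ _ (by simp), List.getD_replicate _ (by omega)]
            omega

/-- the word-to-array map is a bijection -/
theorem main (n : ℕ) : Function.Bijective
    (fun l : {l : List ℕ // l.Perm (List.range' 1 n)} =>
      (⟨G (code l.1), (good_iff _ _).1 (by
        have := good_G (code l.1) (code_isCode l.1)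
        rwa [code_length, l.2.length_eq, List.length_range'] at this)⟩ :
        {a : List (List ℕ) // IsDPP a ∧ DPPOrder a n ∧ NoSpecialPart a})) := by
  constructor
  · rintro ⟨l, hl⟩ ⟨l', hl'⟩ h
    simp only [Subtype.mk.injEq] at h ⊢
    have hp := hl.trans hl'.symm
    apply code_inj l l' hp
    apply G_inj _ _ _ (code_isCode _) (code_isCode _) h
    rw [code_length, code_length, hp.length_eq]
  · rintro ⟨a, ha⟩
    obtain ⟨c, hc, hc', e⟩ := G_surj n a ((good_iff _ _).2 ha)
    obtain ⟨l, h1, h2, h3⟩ := code_surj c (List.range' 1 n).toFinset hc' (by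
      rw [List.toFinset_card_of_nodup List.nodup_range', List.length_range', hc])
    refine ⟨⟨l, List.perm_of_nodup_nodup_toFinset_eq h1 List.nodup_range' h2⟩, ?_⟩
    simp only [Subtype.mk.injEq]
    rw [h3, e]

end DPPaux

/-- The main bijection: for every `n ≥ 1` there is a bijection `Φ` from descending plane
partitions of order `n` with no special part onto permutations of `{1,…,n}` such that a DPP
with `k` rows of lengths `m_1,…,m_k` maps to a permutation with exactly `k` ascents whose
non-inversion number satisfies `I(Φ a) = Σ_{i,j} a_{i,j} − Σ_i m_i²` (stated additively). -/
theorem dpp_perm_bijection (n : ℕ) (hn : 1 ≤ n) :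
    ∃ Φ : {a : List (List ℕ) // IsDPP a ∧ DPPOrder a n ∧ NoSpecialPart a} ≃
        {l : List ℕ // l.Perm (List.range' 1 n)},
      ∀ a, numAscents (Φ a).1 = a.1.length ∧
        noninv (Φ a).1 + (a.1.map fun row => row.length ^ 2).sum =
          (a.1.map List.sum).sum := by
  refine ⟨(Equiv.ofBijective _ (DPPaux.main n)).symm, fun a => ?_⟩
  obtain ⟨l, rfl⟩ := (Equiv.ofBijective _ (DPPaux.main n)).surjective a
  rw [Equiv.symm_apply_apply]
  refine ⟨DPPaux.numAscents_G l.1, ?_⟩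
  rw [DPPaux.noninv_code]
  exact DPPaux.G_sum _ (DPPaux.code_isCode _)
end
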